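/- arXiv:solv-int/9705015 — 6 statements merged into one kernel-verified Lean document; each statement's English description precedes it below -/
import Mathlib

section
/- For all l₁, l₂ ∈ ℤ one has ⁅σ l₁, σ l₂⁆ = ((l₁ : ℝ) − (l₂ : ℝ)) • σ (l₁ + l₂); i.e., the elements σ l themselves satisfy the Witt (centreless Virasoro) commutation relations, so that together with the K l they constitute a Lie algebra with the same commutation relations as the original centreless Virasoro algebra. -/
/-!
Put `X = ∑ j, β j • K (i j)` and `D = ad X`. The relation for `⁅K, ρ⁆` says `σ l = D (ρ l) + ρ l`,
so `σ` is `exp D` applied to `ρ`, truncated after the linear term. Since `D` is a derivation,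
`⁅σ a, σ b⁆` differs from `(1 + D) ⁅ρ a, ρ b⁆` only by `⁅D (ρ a), D (ρ b)⁆`, which vanishes because
the `K l` commute.
-/

section LieAlgebra

variable {R L : Type*} [CommRing R] [LieRing L] [LieAlgebra R L]

theorem lie_apply_add_self_of_lie_apply_eq_zero (D : LieDerivation R L L) {x y : L}
    (h : ⁅D x, D y⁆ = 0) :
    ⁅D x + x, D y + y⁆ = D ⁅x, y⁆ + ⁅x, y⁆ := by
  rw [add_lie, lie_add, lie_add, h, zero_add, D.apply_lie_eq_add]
  abel

theorem lie_sum_smul_sum_smul_eq_zero {M ι ι' : Type*} [AddCommGroup M] [Module R M]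
    [LieRingModule L M] [LieModule R L M] (s : Finset ι) (t : Finset ι') (b : ι → R)
    (c : ι' → R) {x : ι → L} {y : ι' → M} (h : ∀ j ∈ s, ∀ k ∈ t, ⁅x j, y k⁆ = 0) :
    ⁅∑ j ∈ s, b j • x j, ∑ k ∈ t, c k • y k⁆ = 0 := by
  rw [sum_lie]
  refine Finset.sum_eq_zero fun j hj => ?_
  rw [lie_sum]
  exact Finset.sum_eq_zero fun k hk => by rw [smul_lie, lie_smul, h j hj k hk, smul_zero, smul_zero]

theorem stmt_1_general {G ι : Type*} [Add G] (κ c : G → G → R) (K ρ : G → L)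
    (hKK : ∀ a b, ⁅K a, K b⁆ = 0)
    (hKρ : ∀ a b, ⁅K a, ρ b⁆ = κ a b • K (a + b))
    (hρρ : ∀ a b, ⁅ρ a, ρ b⁆ = c a b • ρ (a + b))
    (s : Finset ι) (i : ι → G) (β : ι → R) (σ : G → L)
    (hσ : ∀ a, σ a = (∑ j ∈ s, β j • (κ (i j) a • K (i j + a))) + ρ a) (a b : G) :
    ⁅σ a, σ b⁆ = c a b • σ (a + b) := by
  let D := LieDerivation.ad R L (∑ j ∈ s, β j • K (i j))
  have D_apply (g : G) : D (ρ g) = ∑ j ∈ s, β j • (κ (i j) g • K (i j + g)) := by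
    simp only [D, LieDerivation.ad_apply_apply, sum_lie, smul_lie, hKρ]
  have lie_D_eq_zero : ⁅D (ρ a), D (ρ b)⁆ = 0 := by
    simp only [D_apply, smul_smul]
    exact lie_sum_smul_sum_smul_eq_zero s s _ _ fun _ _ _ _ => hKK _ _
  have σ_eq (g : G) : σ g = D (ρ g) + ρ g := by rw [hσ, D_apply]
  calc
    ⁅σ a, σ b⁆ = D ⁅ρ a, ρ b⁆ + ⁅ρ a, ρ b⁆ := by
      rw [σ_eq a, σ_eq b, lie_apply_add_self_of_lie_apply_eq_zero D lie_D_eq_zero]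
    _ = c a b • (D (ρ (a + b)) + ρ (a + b)) := by rw [hρρ, map_smul, smul_add]
    _ = c a b • σ (a + b) := by rw [σ_eq]

end LieAlgebra

/-- The elements `σ l = ∑ j, β j • ((i j + γ) • K (i j + l)) + ρ l` themselves satisfy the
Witt (centreless Virasoro) commutation relations. -/
theorem stmt_1 {L : Type*} [LieRing L] [LieAlgebra ℝ L]
    (γ : ℝ) (K ρ : ℤ → L)
    (hKK : ∀ l₁ l₂ : ℤ, ⁅K l₁, K l₂⁆ = 0)
    (hKρ : ∀ l₁ l₂ : ℤ, ⁅K l₁, ρ l₂⁆ = ((l₁ : ℝ) + γ) • K (l₁ + l₂))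
    (hρρ : ∀ l₁ l₂ : ℤ, ⁅ρ l₁, ρ l₂⁆ = ((l₁ : ℝ) - (l₂ : ℝ)) • ρ (l₁ + l₂))
    (m : ℕ) (i : Fin m → ℤ) (β : Fin m → ℝ)
    (σ : ℤ → L)
    (hσ : ∀ l : ℤ, σ l = (∑ j, β j • ((((i j) : ℝ) + γ) • K (i j + l))) + ρ l) :
    ∀ l₁ l₂ : ℤ, ⁅σ l₁, σ l₂⁆ = ((l₁ : ℝ) - (l₂ : ℝ)) • σ (l₁ + l₂) :=
  stmt_1_general (fun (a _ : ℤ) => (a : ℝ) + γ) (fun (a b : ℤ) => (a : ℝ) - b) K ρ hKK hKρ hρρ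
    Finset.univ i β σ hσ
end

section
/- For each j : Fin m define the map A j : L → L by (A j) x = x + (β j) • ⁅K (i j), x⁆ (this is exp(ad_{T_j}) with T_j = β_j K_{i_j}, since ad_{K_{i_j}} is 2-step nilpotent on the relevant elements). Then for every l : ℤ, the composition A (m−1) ∘ ⋯ ∘ A 1 ∘ A 0 applied to ρ l equals σ l = (∑ j, β j • ((((i j) : ℝ) + γ) • K (i j + l))) + ρ l, and the result is independent of the order of composition. -/
/-!
Each `A j` is `1 + N j` with `N j = β j • ad (K (i j))`. Since `N k (ρ l)` is a multiple of some
`K n` and the `K`'s commute, `N j (N k (ρ l)) = 0`. Hence all terms of degree at least two in the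
expanded product of the `1 + N j` vanish at `ρ l`, and the product acts there as `1 + ∑ j, N j`,
which is symmetric in the factors.
-/

section CompositionOfIdAdd

variable {ι M F : Type*} [AddCommMonoid M] [FunLike F M M] [AddMonoidHomClass F M M]

theorem foldr_comp_map_id_add_apply (N : ι → F) (x : M) (s : List ι)
    (hN : s.Pairwise fun j k => N j (N k x) = 0) :
    (s.map fun j y => y + N j y).foldr (· ∘ ·) id x = (s.map fun j => N j x).sum + x := by
  induction s with
  | nil => simp
  | cons a s ih =>
    obtain ⟨ha, hs⟩ := List.pairwise_cons.mp hN
    have map_sum_eq_zero : N a (s.map fun j => N j x).sum = 0 := by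
      rw [map_list_sum, List.map_map]
      exact List.sum_eq_zero (by simpa using ha)
    rw [List.map_cons, List.foldr_cons, Function.comp_apply, ih hs, map_add, map_sum_eq_zero,
      zero_add, List.map_cons, List.sum_cons]
    abel

theorem foldr_comp_ofFn_id_add_apply [Fintype ι] (N : ι → F) {x : M}
    (hN : ∀ j k, N j (N k x) = 0) {m : ℕ} (e : Fin m ≃ ι) :
    (List.ofFn fun j y => y + N (e j) y).foldr (· ∘ ·) id x = ∑ j, N j x + x := by
  have h := foldr_comp_map_id_add_apply N x (List.ofFn e) (List.pairwise_of_forall hN)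
  rw [List.map_ofFn, List.map_ofFn, List.sum_ofFn] at h
  exact h.trans (congrArg (· + x) (e.sum_comp fun j => N j x))

end CompositionOfIdAdd

theorem stmt_4_general {R L ι : Type*} [CommRing R] [LieRing L] [LieAlgebra R L] [Fintype ι]
    (γ : R) (K ρ : ℤ → L)
    (hKK : ∀ l₁ l₂ : ℤ, ⁅K l₁, K l₂⁆ = 0)
    (hKρ : ∀ l₁ l₂ : ℤ, ⁅K l₁, ρ l₂⁆ = ((l₁ : R) + γ) • K (l₁ + l₂))
    (i : ι → ℤ) (β : ι → R) (A : ι → L → L)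
    (hA : ∀ (j : ι) (x : L), A j x = x + β j • ⁅K (i j), x⁆)
    (l : ℤ) {m : ℕ} (e : Fin m ≃ ι) :
    ((List.ofFn fun j => A (e j)).foldr (· ∘ ·) id) (ρ l)
      = (∑ j, β j • (((i j : R) + γ) • K (i j + l))) + ρ l := by
  let N : ι → Module.End R L := fun j => β j • LieAlgebra.ad R L (K (i j))
  have A_eq : A = fun j x => x + N j x := funext₂ hA
  have N_apply_ρ (j : ι) : N j (ρ l) = β j • (((i j : R) + γ) • K (i j + l)) :=
    congrArg (β j • ·) (hKρ (i j) l)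
  have N_apply_K (j : ι) (n : ℤ) : N j (K n) = 0 := by
    simp [N, hKK]
  have N_apply_N_apply_ρ (j k : ι) : N j (N k (ρ l)) = 0 := by
    rw [N_apply_ρ, map_smul, map_smul, N_apply_K, smul_zero, smul_zero]
  simpa only [A_eq, N_apply_ρ] using foldr_comp_ofFn_id_add_apply N N_apply_N_apply_ρ e

/-- For `A j x = x + β j • ⁅K (i j), x⁆` (i.e. `exp(ad_{β_j K_{i_j}})`), the composition
of the `A j` in any order, applied to `ρ l`, equals
`σ l = ∑ j, β j • ((i j + γ) • K (i j + l)) + ρ l`; in particular the result is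
independent of the order of composition. -/
theorem stmt_4 {L : Type*} [LieRing L] [LieAlgebra ℝ L]
    (γ : ℝ) (K ρ : ℤ → L)
    (hKK : ∀ l₁ l₂ : ℤ, ⁅K l₁, K l₂⁆ = 0)
    (hKρ : ∀ l₁ l₂ : ℤ, ⁅K l₁, ρ l₂⁆ = ((l₁ : ℝ) + γ) • K (l₁ + l₂))
    (hρρ : ∀ l₁ l₂ : ℤ, ⁅ρ l₁, ρ l₂⁆ = ((l₁ : ℝ) - (l₂ : ℝ)) • ρ (l₁ + l₂))
    (m : ℕ) (i : Fin m → ℤ) (β : Fin m → ℝ)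
    (A : Fin m → L → L)
    (hA : ∀ (j : Fin m) (x : L), A j x = x + β j • ⁅K (i j), x⁆) :
    ∀ (l : ℤ) (π : Equiv.Perm (Fin m)),
      ((List.ofFn fun j => A (π j)).foldr (· ∘ ·) id) (ρ l)
        = (∑ j, β j • ((((i j) : ℝ) + γ) • K (i j + l))) + ρ l :=
  fun l π => stmt_4_general γ K ρ hKK hKρ i β A hA l π
end

section
/- If K ∈ E 0 and ρ ∈ E l (l : ℕ), then (ad K)^(l+1) ρ = 0; i.e., in a graded Lie algebra with ⁅E(R_i), E(R_j)⁆ ⊆ E(R_{i+j−1}) and E(R_{−1}) = 0, the adjoint action of a degree-0 element is nilpotent on each graded piece, so the exponential series exp(ad_{β K}) ρ truncates after the term of order l. -/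
theorem mapsTo_iterate_of_mapsTo_succ {α : Type*} {f : α → α} {S : ℕ → Set α}
    (hf : ∀ n, Set.MapsTo f (S (n + 1)) (S n)) (n : ℕ) : Set.MapsTo f^[n] (S n) (S 0) := by
  induction n with
  | zero => exact Set.mapsTo_id (S 0)
  | succ n ih => exact ih.comp (hf n)

theorem stmt_5_general {L M : Type*} [Bracket L M] [Zero M] {S : ℕ → Set M} {K : L}
    (lie_zero : ∀ x ∈ S 0, ⁅K, x⁆ = 0) (lie_succ : ∀ n, ∀ x ∈ S (n + 1), ⁅K, x⁆ ∈ S n)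
    {l : ℕ} {x : M} (hx : x ∈ S l) : (fun y => ⁅K, y⁆)^[l + 1] x = 0 := by
  rw [Function.iterate_succ_apply']
  exact lie_zero _ (mapsTo_iterate_of_mapsTo_succ lie_succ l hx)

/-- In a graded Lie algebra with `⁅E(R_i), E(R_j)⁆ ⊆ E(R_{i+j-1})` and `E(R_{-1}) = 0`,
the adjoint action of a degree-0 element `K` is nilpotent on each graded piece:
`(ad K)^(l+1) ρ = 0` for `ρ ∈ E l`. -/
theorem stmt_5 {L : Type*} [LieRing L] [LieAlgebra ℝ L]
    (E : ℕ → Submodule ℝ L)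
    (h0 : ∀ a ∈ E 0, ∀ b ∈ E 0, ⁅a, b⁆ = 0)
    (h1 : ∀ i j : ℕ, 1 ≤ i + j → ∀ a ∈ E i, ∀ b ∈ E j, ⁅a, b⁆ ∈ E (i + j - 1))
    (K : L) (hK : K ∈ E 0) (l : ℕ) (ρ : L) (hρ : ρ ∈ E l) :
    (fun y => ⁅K, y⁆)^[l + 1] ρ = 0 := by
  have lie_succ (n : ℕ) (x : L) (hx : x ∈ E (n + 1)) : ⁅K, x⁆ ∈ E n := by
    simpa using h1 0 (n + 1) (by omega) K hK x hx
  exact stmt_5_general (S := fun i => E i) (h0 K hK) lie_succ hρ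
end

section
/- For ρ₁ ∈ E l₁ and ρ₂ ∈ E l₂ one has ⁅σ_β(ρ₁, l₁), σ_β(ρ₂, l₂)⁆ = σ_β(⁅ρ₁, ρ₂⁆, l₁ + l₂ − 1), where l₁ + l₂ − 1 is truncated natural subtraction (when l₁ = l₂ = 0 both sides vanish since E 0 is abelian). In other words, the map σ_β = exp(ad_{T_m}) ∘ ⋯ ∘ exp(ad_{T_1}) with T_i = β_i K_i is a Lie algebra homomorphism from the graded Lie algebra E(R) = ∑_i E(R_i) onto the graded symmetry algebra σ_β(E(R)). -/
/-- The iterated adjoint `D^j = (ad (K 0))^(j 0) ∘ ⋯ ∘ (ad (K (m-1)))^(j (m-1))`. -/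
def adPow {L : Type*} [LieRing L] {m : ℕ} (K : Fin m → L) (j : Fin m → ℕ) : L → L :=
  (List.ofFn fun i => (fun y => ⁅K i, y⁆)^[j i]).foldr (· ∘ ·) id

/-- `σ_β(ρ, l) = ∑_{|j| ≤ l} (∏ i, β i ^ (j i) / (j i)!) • D^j ρ`, the image of a graded
element `ρ ∈ E l` under `exp(ad_{T_m}) ∘ ⋯ ∘ exp(ad_{T_1})` with `T_i = β_i K_i`.
(Since `j i ≤ |j| ≤ l` for each component, summing over `j ∈ (range (l+1))^m` with
`|j| ≤ l` captures all multi-indices with `|j| ≤ l`.) -/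
noncomputable def sigmaB {L : Type*} [LieRing L] [LieAlgebra ℝ L] {m : ℕ}
    (K : Fin m → L) (β : Fin m → ℝ) (l : ℕ) (ρ : L) : L :=
  ∑ j ∈ (Fintype.piFinset fun _ : Fin m => Finset.range (l + 1)).filter
      (fun j => ∑ i, j i ≤ l),
    (∏ i, (β i) ^ (j i) / ((j i).factorial : ℝ)) • adPow K j ρ

/-!
Write `t j = c_β(j) D^j` for the multi-index terms of `exp(ad T_m) ∘ ⋯ ∘ exp(ad T_1)`. Each
`ad (K i)` is a derivation, so the divided powers satisfy the Leibniz rule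
`t j ⁅y, z⁆ = ∑ ⁅t p y, t q z⁆`, summed over `p + q = j` without binomial coefficients.
Multiplicativity of `σ_β` is therefore a Cauchy product of finite sums, provided the three
truncations are compatible. They are: `D^p` lowers the degree by `|p|`, so `⁅t p ρ₁, t q ρ₂⁆`
vanishes unless `|p| ≤ l₁` and `|q| ≤ l₂`, and it also vanishes when both are equalities, being
then a bracket of two elements of the abelian piece `E 0`.
-/

open Finset

section Antidiagonal

variable {μ : Type*} [AddMonoid μ] [HasAntidiagonal μ]

/-- Pairs of functions with a given sum, assembled pointwise; for `μ = ℕ` these are the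
decompositions of a multi-index. -/
instance piHasAntidiagonal {ι : Type*} [Fintype ι] [DecidableEq ι] : HasAntidiagonal (ι → μ) where
  antidiagonal n := (Fintype.piFinset fun i => antidiagonal (n i)).map
    (Equiv.arrowProdEquivProdArrow ι (fun _ => μ) fun _ => μ).toEmbedding
  mem_antidiagonal {n p} := by
    simp [mem_map_equiv, funext_iff]

theorem sum_antidiagonal_finCons {M : Type*} [AddCommMonoid M] {m : ℕ} (a : μ) (n : Fin m → μ)
    (f : (Fin (m + 1) → μ) × (Fin (m + 1) → μ) → M) :
    ∑ p ∈ antidiagonal (Fin.cons a n : Fin (m + 1) → μ), f p =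
      ∑ q ∈ antidiagonal n, ∑ x ∈ antidiagonal a, f (Fin.cons x.1 q.1, Fin.cons x.2 q.2) := by
  rw [← sum_product']
  refine sum_nbij' (fun p => ((Fin.tail p.1, Fin.tail p.2), (p.1 0, p.2 0)))
    (fun y => (Fin.cons y.2.1 y.1.1, Fin.cons y.2.2 y.1.2)) ?_ ?_ ?_ ?_ ?_
  · simp +contextual [funext_iff, Fin.forall_fin_succ, Fin.tail]
  · simp +contextual [funext_iff, Fin.forall_fin_succ]
  all_goals simp

theorem sum_product_eq_sum_antidiagonal {M : Type*} [AddCommMonoid M] {s t r : Finset μ}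
    {f : μ × μ → M} (hf : ∀ p, f p ≠ 0 → p.1 ∈ s ∧ p.2 ∈ t ∧ p.1 + p.2 ∈ r) :
    ∑ p ∈ s ×ˢ t, f p = ∑ n ∈ r, ∑ p ∈ antidiagonal n, f p := by
  rw [sum_sigma']
  refine sum_bij_ne_zero (fun p _ _ => ⟨p.1 + p.2, p⟩) ?_ ?_ ?_ ?_
  · intro p _ hp
    simpa using (hf p hp).2.2
  · simp
  · rintro ⟨n, p⟩ hnp hp
    obtain rfl : p.1 + p.2 = n := by simpa using (mem_sigma.1 hnp).2
    exact ⟨p, mem_product.2 ⟨(hf p hp).1, (hf p hp).2.1⟩, hp, rfl⟩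
  · simp

end Antidiagonal

section LieRing

variable {L : Type*} [LieRing L] {m : ℕ}

theorem adPow_cons (K : Fin (m + 1) → L) (k : ℕ) (j : Fin m → ℕ) (y : L) :
    adPow K (Fin.cons k j) y = (fun z => ⁅K 0, z⁆)^[k] (adPow (Fin.tail K) j y) := by
  simp [adPow, List.ofFn_succ, Fin.tail_def]

theorem iterate_lie_eq_zero_or_mem {E : ℕ → Set L} {x : L} (hx₀ : ∀ a ∈ E 0, ⁅x, a⁆ = 0)
    (hx : ∀ l, ∀ a ∈ E (l + 1), ⁅x, a⁆ ∈ E l) {l : ℕ} {a : L} (ha : a ∈ E l) (k : ℕ) :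
    (fun y => ⁅x, y⁆)^[k] a = 0 ∨ ∃ n, n + k = l ∧ (fun y => ⁅x, y⁆)^[k] a ∈ E n := by
  induction k with
  | zero => exact Or.inr ⟨l, rfl, ha⟩
  | succ k ih =>
    rw [Function.iterate_succ_apply']
    obtain hzero | ⟨_ | n, hn, hmem⟩ := ih
    · exact Or.inl (by rw [hzero, lie_zero])
    · exact Or.inl (hx₀ _ hmem)
    · exact Or.inr ⟨n, by omega, hx n _ hmem⟩

theorem adPow_eq_zero_or_mem {E : ℕ → Set L} {K : Fin m → L}
    (hK₀ : ∀ i, ∀ a ∈ E 0, ⁅K i, a⁆ = 0) (hK : ∀ i l, ∀ a ∈ E (l + 1), ⁅K i, a⁆ ∈ E l)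
    {l : ℕ} {a : L} (ha : a ∈ E l) (j : Fin m → ℕ) :
    adPow K j a = 0 ∨ ∃ n, n + ∑ i, j i = l ∧ adPow K j a ∈ E n := by
  induction m with
  | zero => exact Or.inr ⟨l, by simp, by simpa [adPow] using ha⟩
  | succ m ih =>
    cases j using Fin.consCases with | cons k j
    rw [adPow_cons, Fin.sum_cons]
    obtain hzero | ⟨n, hn, hmem⟩ := ih (fun i => hK₀ i.succ) (fun i => hK i.succ) j
    · refine Or.inl ?_
      rw [Fin.tail_def, hzero]
      exact Function.iterate_fixed (lie_zero _) k
    · refine (iterate_lie_eq_zero_or_mem (hK₀ 0) (hK 0) hmem k).imp_right ?_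
      rintro ⟨n', hn', hmem'⟩
      exact ⟨n', by omega, hmem'⟩

theorem sum_le_of_lie_adPow_ne_zero {E : ℕ → Set L} (hE : ∀ a ∈ E 0, ∀ b ∈ E 0, ⁅a, b⁆ = 0)
    {K : Fin m → L} (hK₀ : ∀ i, ∀ a ∈ E 0, ⁅K i, a⁆ = 0)
    (hK : ∀ i l, ∀ a ∈ E (l + 1), ⁅K i, a⁆ ∈ E l) {l₁ l₂ : ℕ} {a b : L} (ha : a ∈ E l₁)
    (hb : b ∈ E l₂) {p q : Fin m → ℕ} (hne : ⁅adPow K p a, adPow K q b⁆ ≠ 0) :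
    ∑ i, p i ≤ l₁ ∧ ∑ i, q i ≤ l₂ ∧ ∑ i, p i + ∑ i, q i ≤ l₁ + l₂ - 1 := by
  obtain hp | ⟨n₁, hn₁, hmem₁⟩ := adPow_eq_zero_or_mem hK₀ hK ha p
  · simp [hp] at hne
  obtain hq | ⟨n₂, hn₂, hmem₂⟩ := adPow_eq_zero_or_mem hK₀ hK hb q
  · simp [hq] at hne
  have not_both_zero : ¬(n₁ = 0 ∧ n₂ = 0) := by
    rintro ⟨rfl, rfl⟩
    exact hne (hE _ hmem₁ _ hmem₂)
  omega

end LieRing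

section TruncatedExponential

variable {𝕜 : Type*} [Field 𝕜] {L : Type*} [LieRing L] [LieAlgebra 𝕜 L] {m : ℕ}

/-- The term of degree `k` in the power series `exp (b • ad x)`. -/
def expAdTerm (x : L) (b : 𝕜) (k : ℕ) : Module.End 𝕜 L :=
  (b ^ k / (k.factorial : 𝕜)) • LieAlgebra.ad 𝕜 L x ^ k

/-- The term of multidegree `j` in the composite of the power series `exp (β i • ad (K i))`, which
the paper writes `c_β(j) D^j`. -/
def expAdMultiTerm (K : Fin m → L) (β : Fin m → 𝕜) (j : Fin m → ℕ) (y : L) : L :=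
  (∏ i, β i ^ j i / ((j i).factorial : 𝕜)) • adPow K j y

/-- The multi-indices `j` with `|j| ≤ l`. The bounding box is the one used by `sigmaB`. -/
def multiIndexLE (m l : ℕ) : Finset (Fin m → ℕ) :=
  {j ∈ Fintype.piFinset fun _ : Fin m => range (l + 1) | ∑ i, j i ≤ l}

/-- The composite of the power series `exp (β i • ad (K i))` truncated at total degree `l`: the map
`sigmaB` over an arbitrary field of scalars. -/
def truncExpAd (K : Fin m → L) (β : Fin m → 𝕜) (l : ℕ) (y : L) : L :=
  ∑ j ∈ multiIndexLE m l, expAdMultiTerm K β j y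

theorem mem_multiIndexLE {l : ℕ} {j : Fin m → ℕ} : j ∈ multiIndexLE m l ↔ ∑ i, j i ≤ l := by
  simp only [multiIndexLE, mem_filter, Fintype.mem_piFinset, mem_range, Order.lt_add_one_iff,
    and_iff_right_iff_imp]
  exact fun hj i => (single_le_sum_of_canonicallyOrdered (mem_univ i)).trans hj

theorem expAdMultiTerm_cons (K : Fin (m + 1) → L) (β : Fin (m + 1) → 𝕜) (k : ℕ) (j : Fin m → ℕ)
    (y : L) :
    expAdMultiTerm K β (Fin.cons k j) y =
      expAdTerm (K 0) (β 0) k (expAdMultiTerm (Fin.tail K) (Fin.tail β) j y) := by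
  have iterate_eq (z : L) : (fun w => ⁅K 0, w⁆)^[k] z = (LieAlgebra.ad 𝕜 L (K 0) ^ k) z :=
    (Module.End.pow_apply (LieAlgebra.ad 𝕜 L (K 0)) k z).symm
  simp only [expAdMultiTerm, expAdTerm, adPow_cons, iterate_eq, Fin.prod_univ_succ, Fin.cons_zero,
    Fin.cons_succ, Fin.tail_def, LinearMap.smul_apply, map_smul, smul_smul]
  rw [mul_comm]

variable [CharZero 𝕜]

theorem pow_div_factorial_mul_choose (b : 𝕜) (p q : ℕ) :
    b ^ (p + q) / ((p + q).factorial : 𝕜) * ((p + q).choose p : 𝕜) =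
      b ^ p / (p.factorial : 𝕜) * (b ^ q / (q.factorial : 𝕜)) := by
  have (n : ℕ) : (n.factorial : 𝕜) ≠ 0 := Nat.cast_ne_zero.2 n.factorial_ne_zero
  rw [Nat.cast_add_choose, pow_add]
  field_simp [this]

theorem expAdTerm_lie (x : L) (b : 𝕜) (k : ℕ) (y z : L) :
    expAdTerm x b k ⁅y, z⁆ =
      ∑ p ∈ antidiagonal k, ⁅expAdTerm x b p.1 y, expAdTerm x b p.2 z⁆ := by
  simp only [expAdTerm, LinearMap.smul_apply, LieAlgebra.ad_pow_lie, smul_sum]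
  refine sum_congr rfl fun p hp => ?_
  rw [← mem_antidiagonal.1 hp, smul_lie, lie_smul, smul_smul, ← pow_div_factorial_mul_choose,
    mul_smul, Nat.cast_smul_eq_nsmul]

theorem expAdMultiTerm_lie (K : Fin m → L) (β : Fin m → 𝕜) (j : Fin m → ℕ) (y z : L) :
    expAdMultiTerm K β j ⁅y, z⁆ =
      ∑ p ∈ antidiagonal j, ⁅expAdMultiTerm K β p.1 y, expAdMultiTerm K β p.2 z⁆ := by
  induction m with
  | zero =>
    have : antidiagonal j = {(j, j)} := by
      ext p
      simp [eq_iff_true_of_subsingleton]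
    simp [this, expAdMultiTerm, adPow]
  | succ m ih =>
    cases j using Fin.consCases with | cons k j
    simp only [sum_antidiagonal_finCons, expAdMultiTerm_cons, ih, map_sum, expAdTerm_lie]

theorem stmt_9_general {E : ℕ → Set L} (hE : ∀ a ∈ E 0, ∀ b ∈ E 0, ⁅a, b⁆ = 0) {K : Fin m → L}
    (hK₀ : ∀ i, ∀ a ∈ E 0, ⁅K i, a⁆ = 0) (hK : ∀ i l, ∀ a ∈ E (l + 1), ⁅K i, a⁆ ∈ E l)
    (β : Fin m → 𝕜) {l₁ l₂ : ℕ} {ρ₁ ρ₂ : L} (hρ₁ : ρ₁ ∈ E l₁) (hρ₂ : ρ₂ ∈ E l₂) :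
    ⁅truncExpAd K β l₁ ρ₁, truncExpAd K β l₂ ρ₂⁆ =
      truncExpAd K β (l₁ + l₂ - 1) ⁅ρ₁, ρ₂⁆ := by
  simp only [truncExpAd, expAdMultiTerm_lie, sum_lie_sum, ← sum_product']
  refine sum_product_eq_sum_antidiagonal
    (f := fun p => ⁅expAdMultiTerm K β p.1 ρ₁, expAdMultiTerm K β p.2 ρ₂⁆) fun ⟨p, q⟩ hpq => ?_
  have hne : ⁅adPow K p ρ₁, adPow K q ρ₂⁆ ≠ 0 := by
    contrapose! hpq
    simp only [expAdMultiTerm, smul_lie, lie_smul, hpq, smul_zero]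
  simpa only [mem_multiIndexLE, Pi.add_apply, sum_add_distrib] using
    sum_le_of_lie_adPow_ne_zero hE hK₀ hK hρ₁ hρ₂ hne

end TruncatedExponential

/-- `σ_β` is a Lie algebra homomorphism from the graded Lie algebra `E(R) = ∑_i E(R_i)`
onto the graded symmetry algebra: for `ρ₁ ∈ E l₁` and `ρ₂ ∈ E l₂`,
`⁅σ_β(ρ₁, l₁), σ_β(ρ₂, l₂)⁆ = σ_β(⁅ρ₁, ρ₂⁆, l₁ + l₂ - 1)`. -/
theorem stmt_9 {L : Type*} [LieRing L] [LieAlgebra ℝ L]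
    (E : ℕ → Submodule ℝ L)
    (h0 : ∀ a ∈ E 0, ∀ b ∈ E 0, ⁅a, b⁆ = 0)
    (h1 : ∀ i j : ℕ, 1 ≤ i + j → ∀ a ∈ E i, ∀ b ∈ E j, ⁅a, b⁆ ∈ E (i + j - 1))
    (m : ℕ) (K : Fin m → L) (hK : ∀ i, K i ∈ E 0) (β : Fin m → ℝ)
    (l₁ l₂ : ℕ) (ρ₁ ρ₂ : L) (hρ₁ : ρ₁ ∈ E l₁) (hρ₂ : ρ₂ ∈ E l₂) :
    ⁅sigmaB K β l₁ ρ₁, sigmaB K β l₂ ρ₂⁆ = sigmaB K β (l₁ + l₂ - 1) ⁅ρ₁, ρ₂⁆ := by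
  exact stmt_9_general (E := fun l => E l) h0 (fun i => h0 _ (hK i))
    (fun i l a ha => by simpa using h1 0 (l + 1) (by omega) _ (hK i) a ha) β hρ₁ hρ₂
end

section
/- For each i : Fin m define Φ i : L → L by (Φ i) x = ∑_{j=0}^{l} ((β i)^j / j!) • (ad (K i))^j x (the exponential exp(ad_{β_i K_i}), truncated at order l). Then for every ρ ∈ E l, the composition (Φ (m−1)) ∘ ⋯ ∘ (Φ 1) ∘ (Φ 0) applied to ρ equals the multi-index sum σ_β(ρ, l) = ∑_{|j| ≤ l} c_β(j) • D^j ρ; i.e., exp(ad_{T_m}) ⋯ exp(ad_{T_1}) ρ_l = ∑_{0 ≤ j₁+⋯+j_m ≤ l} (β₁^{j₁} ⋯ β_m^{j_m} / (j₁! ⋯ j_m!)) (ad_{K_1})^{j₁} ⋯ (ad_{K_m})^{j_m} ρ_l. -/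
/-!
The operators `ad (K i)` commute, so the order of the factors is immaterial and multilinearity of
the product expands the composition into a sum over the box `{0, …, l}^m`. Each `ad (K i)` lowers
the degree by one, so the terms with `|j| > l` send `ρ` to degree below zero and vanish.
-/

open Finset

theorem prod_ofFn_sum_smul {R A κ : Type*} [CommSemiring R] [Semiring A] [Algebra R A] {m : ℕ}
    (s : Fin m → Finset κ) (c : Fin m → κ → R) (a : Fin m → κ → A) :
    (List.ofFn fun i => ∑ k ∈ s i, c i k • a i k).prod =
      ∑ j ∈ Fintype.piFinset s, (∏ i, c i (j i)) • (List.ofFn fun i => a i (j i)).prod := by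
  classical
  simpa only [MultilinearMap.map_smul_univ, MultilinearMap.mkPiAlgebraFin_apply] using
    (MultilinearMap.mkPiAlgebraFin R m A).map_sum_finset (fun i k => c i k • a i k) s

section LinearMaps

variable {R M : Type*} [Semiring R] [AddCommMonoid M] [Module R M]

theorem foldr_comp_map_coe_end (fs : List (Module.End R M)) :
    (fs.map (⇑)).foldr (· ∘ ·) id = ⇑fs.prod := by
  induction fs with
  | nil => rfl
  | cons f fs ih => rw [List.map_cons, List.foldr_cons, ih, List.prod_cons, Module.End.coe_mul]

theorem foldr_comp_ofFn_coe_end {m : ℕ} (f : Fin m → Module.End R M) :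
    (List.ofFn fun i => ⇑(f i)).foldr (· ∘ ·) id = ⇑(List.ofFn f).prod := by
  rw [← foldr_comp_map_coe_end, List.map_ofFn]
  rfl

end LinearMaps

section Degree

/-- The sets `E (n - 1)` reindexed by `n : ℕ`, with the convention that degree `-1` is zero. The
shift lets truncated subtraction describe operators lowering the degree: once in degree `-1`, an
element stays there. -/
def shiftedDegree {α : Type*} [Zero α] (E : ℕ → Set α) : ℕ → Set α
  | 0 => {0}
  | n + 1 => E n

variable {α : Type*} {F : ℕ → Set α}

theorem mapsTo_iterate_tsub {f : α → α} (hf : ∀ n, Set.MapsTo f (F n) (F (n - 1))) (k n : ℕ) :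
    Set.MapsTo f^[k] (F n) (F (n - k)) := by
  induction k with
  | zero => exact Set.mapsTo_id _
  | succ k ih =>
    rw [Function.iterate_succ', ← Nat.sub_sub]
    exact (hf _).comp ih

theorem mapsTo_foldr_comp_ofFn_tsub {m : ℕ} {f : Fin m → α → α} {d : Fin m → ℕ}
    (hf : ∀ i n, Set.MapsTo (f i) (F n) (F (n - d i))) (n : ℕ) :
    Set.MapsTo ((List.ofFn f).foldr (· ∘ ·) id) (F n) (F (n - ∑ i, d i)) := by
  induction m with
  | zero => simpa using Set.mapsTo_id (F n)
  | succ m ih =>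
    rw [List.ofFn_succ, List.foldr_cons, Fin.sum_univ_succ, add_comm (d 0), ← Nat.sub_sub]
    exact (hf 0 _).comp (ih fun i => hf i.succ)

end Degree

section Adjoint

variable {L : Type*} [LieRing L] {m : ℕ} {K : Fin m → L}

theorem adPow_eq_zero_of_lt_sum {E : ℕ → Set L} (hE_zero : ∀ i, ∀ x ∈ E 0, ⁅K i, x⁆ = 0)
    (hE_succ : ∀ i n, ∀ x ∈ E (n + 1), ⁅K i, x⁆ ∈ E n) {l : ℕ} {ρ : L} (hρ : ρ ∈ E l)
    {j : Fin m → ℕ} (hj : l < ∑ i, j i) : adPow K j ρ = 0 := by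
  have lowers (i : Fin m) :
      ∀ n, Set.MapsTo (fun y => ⁅K i, y⁆) (shiftedDegree E n) (shiftedDegree E (n - 1))
    | 0 => by rintro _ rfl; exact lie_zero _
    | 1 => hE_zero i
    | n + 2 => hE_succ i n
  have hmem : adPow K j ρ ∈ shiftedDegree E (l + 1 - ∑ i, j i) :=
    mapsTo_foldr_comp_ofFn_tsub (fun i => mapsTo_iterate_tsub (lowers i) (j i)) (l + 1) hρ
  rwa [Nat.sub_eq_zero_of_le hj] at hmem

variable {R : Type*} [CommRing R] [LieAlgebra R L]

theorem commute_ad_of_lie_eq_zero {x y : L} (h : ⁅x, y⁆ = 0) :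
    Commute (LieAlgebra.ad R L x) (LieAlgebra.ad R L y) :=
  LinearMap.ext fun z => by
    simp only [Module.End.mul_apply, LieAlgebra.ad_apply, leibniz_lie x, h, zero_lie, zero_add]

theorem iterate_lie_eq_ad_pow (x : L) (k : ℕ) :
    (fun y => ⁅x, y⁆)^[k] = ⇑(LieAlgebra.ad R L x ^ k) :=
  (Module.End.coe_pow (LieAlgebra.ad R L x) k).symm

theorem adPow_eq_prod_ad_pow (j : Fin m → ℕ) :
    adPow K j = ⇑(List.ofFn fun i => LieAlgebra.ad R L (K i) ^ j i).prod := by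
  simp only [adPow, iterate_lie_eq_ad_pow (R := R), foldr_comp_ofFn_coe_end]

theorem foldr_comp_reverse_ofFn_eq_sum_adPow (hK : ∀ i j, ⁅K i, K j⁆ = 0)
    (s : Fin m → Finset ℕ) (c : Fin m → ℕ → R) {Φ : Fin m → L → L}
    (hΦ : ∀ i x, Φ i x = ∑ k ∈ s i, c i k • (fun y => ⁅K i, y⁆)^[k] x) (ρ : L) :
    ((List.ofFn Φ).reverse.foldr (· ∘ ·) id) ρ =
      ∑ j ∈ Fintype.piFinset s, (∏ i, c i (j i)) • adPow K j ρ := by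
  let T (i : Fin m) : Module.End R L := ∑ k ∈ s i, c i k • LieAlgebra.ad R L (K i) ^ k
  have hΦT : List.ofFn Φ = (List.ofFn T).map (⇑) := by
    rw [List.map_ofFn]
    congr
    funext i x
    simp [T, hΦ, iterate_lie_eq_ad_pow (R := R)]
  have hT : (List.ofFn T).Pairwise Commute := List.pairwise_ofFn.2 fun i i' _ =>
    Commute.sum_left _ _ _ fun k _ => Commute.sum_right _ _ _ fun k' _ =>
      (((commute_ad_of_lie_eq_zero (hK i i')).pow_pow k k').smul_left _).smul_right _
  calc ((List.ofFn Φ).reverse.foldr (· ∘ ·) id) ρ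
      = (List.ofFn T).reverse.prod ρ := by
        rw [hΦT, ← List.map_reverse, foldr_comp_map_coe_end]
    _ = (List.ofFn T).prod ρ := by rw [(List.reverse_perm _).symm.prod_eq' hT]
    _ = ∑ j ∈ Fintype.piFinset s, (∏ i, c i (j i)) • adPow K j ρ := by
        simp only [T, prod_ofFn_sum_smul, LinearMap.sum_apply, LinearMap.smul_apply,
          adPow_eq_prod_ad_pow (R := R)]

theorem stmt_10_general (hK : ∀ i j, ⁅K i, K j⁆ = 0) {E : ℕ → Set L}
    (hE_zero : ∀ i, ∀ x ∈ E 0, ⁅K i, x⁆ = 0)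
    (hE_succ : ∀ i n, ∀ x ∈ E (n + 1), ⁅K i, x⁆ ∈ E n) (c : Fin m → ℕ → R) {l : ℕ}
    {Φ : Fin m → L → L}
    (hΦ : ∀ i x, Φ i x = ∑ k ∈ range (l + 1), c i k • (fun y => ⁅K i, y⁆)^[k] x)
    {ρ : L} (hρ : ρ ∈ E l) :
    ((List.ofFn Φ).reverse.foldr (· ∘ ·) id) ρ =
      ∑ j ∈ Fintype.piFinset fun _ : Fin m => range (l + 1) with ∑ i, j i ≤ l,
        (∏ i, c i (j i)) • adPow K j ρ := by
  rw [foldr_comp_reverse_ofFn_eq_sum_adPow hK _ c hΦ]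
  refine (sum_filter_of_ne fun j _ hj => ?_).symm
  contrapose! hj
  rw [adPow_eq_zero_of_lt_sum hE_zero hE_succ hρ hj, smul_zero]

end Adjoint

/-- For `Φ i x = ∑_{j=0}^{l} ((β i)^j / j!) • (ad (K i))^j x` (the truncated exponential
`exp(ad_{β_i K_i})`), the composition `Φ (m-1) ∘ ⋯ ∘ Φ 1 ∘ Φ 0` applied to `ρ ∈ E l`
equals the multi-index sum `σ_β(ρ, l)`. -/
theorem stmt_10 {L : Type*} [LieRing L] [LieAlgebra ℝ L]
    (E : ℕ → Submodule ℝ L)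
    (h0 : ∀ a ∈ E 0, ∀ b ∈ E 0, ⁅a, b⁆ = 0)
    (h1 : ∀ i j : ℕ, 1 ≤ i + j → ∀ a ∈ E i, ∀ b ∈ E j, ⁅a, b⁆ ∈ E (i + j - 1))
    (m : ℕ) (K : Fin m → L) (hK : ∀ i, K i ∈ E 0) (β : Fin m → ℝ) (l : ℕ)
    (Φ : Fin m → L → L)
    (hΦ : ∀ (i : Fin m) (x : L),
      Φ i x = ∑ j ∈ Finset.range (l + 1),
        ((β i) ^ j / (Nat.factorial j : ℝ)) • (fun y => ⁅K i, y⁆)^[j] x) :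
    ∀ ρ ∈ E l,
      ((List.ofFn fun i => Φ i).reverse.foldr (· ∘ ·) id) ρ = sigmaB K β l ρ := by
  exact fun _ hρ => stmt_10_general (fun i j => h0 _ (hK i) _ (hK j)) (E := fun n => E n)
    (fun i => h0 _ (hK i)) (fun i n => by simpa using h1 0 (n + 1) (by lia) _ (hK i)) _ hΦ hρ
end

section
/- The bracket underlying the modified KP symmetry relation [σ^{(m)}(f), σ^{(n)}(g)] = σ^{(m+n−2)}((n/2) f_y g − (m/2) f g_y) is a Lie product: for all m, n, p ∈ ℤ and all f, g, h ∈ ℝ[y], (i) antisymmetry: B m n f g = − (B n m g f), and (ii) the Jacobi identity: B (m+n−2) p (B m n f g) h + B (n+p−2) m (B n p g h) f + B (p+m−2) n (B p m h f) g = 0. -/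
open Polynomial

/-- The degree-`(m+n-2)` component of the bracket of the modified KP master-symmetry
generators `σ^{(m)}(f)`, `σ^{(n)}(g)`:
`B m n f g = (n/2) • (f_y g) − (m/2) • (f g_y)`. -/
noncomputable def mkpBracket (m n : ℤ) (f g : Polynomial ℝ) : Polynomial ℝ :=
  (((n : ℝ)) / 2) • (Polynomial.derivative f * g)
    - (((m : ℝ)) / 2) • (f * Polynomial.derivative g)

/-!
Formally, the bracket of `f` and `g` with weights `a` and `b` is the coefficient of `t ^ (a + b)`
in the Poisson bracket `t (F_y G_t - F_t G_y)` of `F = f(y) t ^ a` and `G = g(y) t ^ b`. In two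
variables a Poisson bracket may be multiplied by any function, in particular by `t ^ w`, so the
Jacobi identity should hold when the bracket is given weight `a + b + w`, for every `w`; the KP
bracket has weights `m / 2`, `n / 2` and `w = -1`.

The choice `w = -(a + b + c)` makes the outer bracket of `[f, g]` and `h` the exact derivative
`c D([f, g] h)`, and the cyclic sum of the `c [f, g] h` vanishes. Any other `w` changes the Jacobi
sum by a multiple of the cyclic sum of the `[f, g] D h`, which vanishes as well.
-/

section WeightedBracket

variable {R A : Type*} [CommRing R] [CommRing A] [Algebra R A] (D : Derivation R A A)

/-- The first-order bracket of elements `f` of weight `a` and `g` of weight `b` in a differential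
algebra `(A, D)`; up to sign, the first Rankin–Cohen bracket. The weights are scalars passed
explicitly, so that no grading on `A` is needed. -/
def weightedBracket (a b : R) (f g : A) : A :=
  b • (D f * g) - a • (f * D g)

lemma weightedBracket_antisymm (a b : R) (f g : A) :
    weightedBracket D a b f g = -weightedBracket D b a g f := by
  rw [weightedBracket, weightedBracket, neg_sub, mul_comm f, mul_comm g]

lemma weightedBracket_add_weight_left (a w b : R) (f g : A) :
    weightedBracket D (a + w) b f g = weightedBracket D a b f g - w • (f * D g) := by
  rw [weightedBracket, weightedBracket, add_smul, sub_sub]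

lemma weightedBracket_neg_self (c : R) (f h : A) :
    weightedBracket D (-c) c f h = c • D (f * h) := by
  rw [weightedBracket, D.leibniz, smul_eq_mul, smul_eq_mul, mul_comm h, neg_smul, sub_neg_eq_add,
    ← smul_add, add_comm]

lemma smul_weightedBracket_mul_cyclic (a b c : R) (f g h : A) :
    c • (weightedBracket D a b f g * h) + a • (weightedBracket D b c g h * f)
      + b • (weightedBracket D c a h f * g) = 0 := by
  simp only [weightedBracket, Algebra.smul_def]
  ring

lemma weightedBracket_mul_derivation_cyclic (a b c : R) (f g h : A) :
    weightedBracket D a b f g * D h + weightedBracket D b c g h * D f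
      + weightedBracket D c a h f * D g = 0 := by
  simp only [weightedBracket, Algebra.smul_def]
  ring

lemma weightedBracket_jacobi (w a b c : R) (f g h : A) :
    weightedBracket D (a + b + w) c (weightedBracket D a b f g) h
      + weightedBracket D (b + c + w) a (weightedBracket D b c g h) f
      + weightedBracket D (c + a + w) b (weightedBracket D c a h f) g = 0 := by
  have derivation_cyclic :
      c • D (weightedBracket D a b f g * h) + a • D (weightedBracket D b c g h * f)
        + b • D (weightedBracket D c a h f * g) = 0 := by
    simpa only [map_add, D.map_smul, map_zero] using
      congrArg D (smul_weightedBracket_mul_cyclic D a b c f g h)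
  rw [show a + b + w = -c + (a + b + c + w) by ring,
    show b + c + w = -a + (a + b + c + w) by ring,
    show c + a + w = -b + (a + b + c + w) by ring]
  simp only [weightedBracket_add_weight_left, weightedBracket_neg_self]
  linear_combination (norm := module) derivation_cyclic
    - (a + b + c + w) • weightedBracket_mul_derivation_cyclic D a b c f g h

theorem stmt_12_general :
    (∀ (a b : R) (f g : A), weightedBracket D a b f g = -weightedBracket D b a g f) ∧
    (∀ (w a b c : R) (f g h : A),
      weightedBracket D (a + b + w) c (weightedBracket D a b f g) h
        + weightedBracket D (b + c + w) a (weightedBracket D b c g h) f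
        + weightedBracket D (c + a + w) b (weightedBracket D c a h f) g = 0) :=
  ⟨weightedBracket_antisymm D, weightedBracket_jacobi D⟩

end WeightedBracket

lemma mkpBracket_eq_weightedBracket (m n : ℤ) (f g : ℝ[X]) :
    mkpBracket m n f g = weightedBracket derivative' ((m : ℝ) / 2) ((n : ℝ) / 2) f g :=
  rfl

lemma intCast_add_sub_two_div_two (m n : ℤ) :
    ((m + n - 2 : ℤ) : ℝ) / 2 = (m : ℝ) / 2 + (n : ℝ) / 2 + -1 := by
  push_cast
  ring

/-- The bracket underlying `[σ^{(m)}(f), σ^{(n)}(g)] = σ^{(m+n-2)}((n/2) f_y g − (m/2) f g_y)`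
is a Lie product: it is antisymmetric and satisfies the Jacobi identity. -/
theorem stmt_12 :
    (∀ (m n : ℤ) (f g : Polynomial ℝ), mkpBracket m n f g = -(mkpBracket n m g f)) ∧
    (∀ (m n p : ℤ) (f g h : Polynomial ℝ),
      mkpBracket (m + n - 2) p (mkpBracket m n f g) h
        + mkpBracket (n + p - 2) m (mkpBracket n p g h) f
        + mkpBracket (p + m - 2) n (mkpBracket p m h f) g = 0) := by
  simp only [mkpBracket_eq_weightedBracket, intCast_add_sub_two_div_two]
  exact (stmt_12_general derivative').imp (fun antisymm _ _ ↦ antisymm _ _)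
    fun jacobi _ _ _ ↦ jacobi _ _ _ _
end
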